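/- arXiv:2207.12490 — 4 statements merged into one kernel-verified Lean document; each statement's English description precedes it below -/
import Mathlib

section
/- Let F be an algebraically closed field of characteristic different from 2. Then every nonzero polynomial h ∈ F[z] admits a totally odd part-square decomposition: there exist q, ρ ∈ F[z] with h = q² + ρ, deg q ≤ ⌈deg(h)/2⌉, and the coefficient of z^i in ρ equal to 0 for every even natural number i. -/
open Polynomial

/-!
Write `E f = contract 2 f` for the polynomial with `E f (z²)` the even part of `f`. Finding `q` and
`ρ` amounts to solving `E (q²) = E h` with `deg q ≤ deg (E h)`. If `E (q²) = f`, then the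
polynomial `s q(z) + z q(-z)` solves the same equation for `(X + s²) f`: in the expansion of its
square, the square terms contribute `s² f` and `X f`, and the cross term `2 s z q(z) q(-z)` is odd.
So when `E h` splits and square roots exist, `q` is built up one linear factor at a time.
-/

section Ring

variable {R : Type*} [Ring R]

theorem coeff_comp_neg_X (f : R[X]) (n : ℕ) : (f.comp (-X)).coeff n = f.coeff n * (-1) ^ n := by
  rw [← comp_C_mul_X_coeff, C_neg, C_1, neg_one_mul]

theorem natDegree_comp_neg_X (f : R[X]) : (f.comp (-X)).natDegree = f.natDegree :=
  natDegree_eq_of_degree_eq degree_comp_neg_X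

theorem two_mul_coeff_eq_zero_of_comp_neg_X_eq_self {f : R[X]} (hf : f.comp (-X) = f) {n : ℕ}
    (hn : Odd n) : 2 * f.coeff n = 0 := by
  have hneg : f.coeff n = -f.coeff n := by
    conv_lhs => rw [← hf, coeff_comp_neg_X, hn.neg_one_pow, mul_neg_one]
  rw [two_mul]
  exact eq_neg_iff_add_eq_zero.mp hneg

end Ring

theorem natDegree_contract_mul_le {R : Type*} [CommSemiring R] (p : ℕ) (f : R[X]) :
    (contract p f).natDegree * p ≤ f.natDegree := by
  rcases eq_or_ne p 0 with rfl | hp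
  · simp
  rcases eq_or_ne (contract p f) 0 with hzero | hne
  · simp [hzero]
  apply le_natDegree_of_ne_zero
  rw [← coeff_contract hp]
  exact leadingCoeff_ne_zero.mpr hne

section CommRing

variable {R : Type*} [CommRing R]

theorem contract_two_comp_neg_X (f : R[X]) : contract 2 (f.comp (-X)) = contract 2 f := by
  ext n
  rw [coeff_contract two_ne_zero, coeff_contract two_ne_zero, coeff_comp_neg_X,
    (even_two.mul_left n).neg_one_pow, mul_one]

theorem contract_two_two_mul_X_mul {f : R[X]} (hf : f.comp (-X) = f) :
    contract 2 (2 * (X * f)) = 0 := by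
  ext n
  rw [coeff_contract two_ne_zero, coeff_ofNat_mul, coeff_zero]
  cases n with
  | zero => rw [zero_mul, coeff_X_mul_zero, mul_zero]
  | succ m =>
    rw [show (m + 1) * 2 = 2 * m + 1 + 1 by ring, coeff_X_mul]
    exact two_mul_coeff_eq_zero_of_comp_neg_X_eq_self hf (odd_two_mul_add_one m)

theorem contract_two_sq_C_mul_add_X_mul_comp_neg_X (s : R) (q : R[X]) :
    contract 2 ((C s * q + X * q.comp (-X)) ^ 2) = (X + C (s ^ 2)) * contract 2 (q ^ 2) := by
  set g := C s * (q * q.comp (-X)) with hg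
  have hg_even : g.comp (-X) = g := by
    rw [hg, mul_comp_neg_X, mul_comp_neg_X, C_comp, comp_neg_X_comp_neg_X, mul_comm q]
  have hsq_comp : contract 2 (q.comp (-X) ^ 2) = contract 2 (q ^ 2) := by
    rw [← pow_comp, contract_two_comp_neg_X]
  have hexpand : (C s * q + X * q.comp (-X)) ^ 2 =
      q ^ 2 * expand R 2 (C (s ^ 2)) + q.comp (-X) ^ 2 * expand R 2 X + 2 * (X * g) := by
    rw [expand_C, expand_X, C_pow]
    ring
  rw [hexpand, contract_add two_ne_zero, contract_add two_ne_zero, contract_mul_expand two_ne_zero,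
    contract_mul_expand two_ne_zero, contract_two_two_mul_X_mul hg_even, hsq_comp]
  ring

theorem natDegree_C_mul_add_X_mul_comp_neg_X_le (s : R) (q : R[X]) :
    (C s * q + X * q.comp (-X)).natDegree ≤ q.natDegree + 1 := by
  refine natDegree_add_le_of_degree_le ((natDegree_C_mul_le s q).trans (Nat.le_succ _)) ?_
  calc (X * q.comp (-X)).natDegree ≤ (X : R[X]).natDegree + (q.comp (-X)).natDegree :=
        natDegree_mul_le
    _ ≤ 1 + q.natDegree := add_le_add natDegree_X_le (natDegree_comp_neg_X q).le
    _ = q.natDegree + 1 := add_comm _ _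

theorem exists_contract_two_sq_eq_X_add_C_mul {a : R} (ha : IsSquare a) {f : R[X]}
    (hf : ∃ q : R[X], q.natDegree ≤ f.natDegree ∧ contract 2 (q ^ 2) = f) :
    ∃ q : R[X], q.natDegree ≤ ((X + C a) * f).natDegree ∧
      contract 2 (q ^ 2) = (X + C a) * f := by
  obtain ⟨s, rfl⟩ := ha.exists_sq
  obtain ⟨q, hdeg, rfl⟩ := hf
  rcases eq_or_ne (contract 2 (q ^ 2)) 0 with hzero | hne
  · refine ⟨0, by simp, ?_⟩
    rw [hzero, mul_zero, zero_pow two_ne_zero, ← C_0, contract_C]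
  nontriviality R
  refine ⟨C s * q + X * q.comp (-X), ?_, contract_two_sq_C_mul_add_X_mul_comp_neg_X s q⟩
  rw [(monic_X_add_C _).natDegree_mul' hne, natDegree_X_add_C, Nat.add_comm 1]
  exact (natDegree_C_mul_add_X_mul_comp_neg_X_le s q).trans (Nat.succ_le_succ hdeg)

theorem exists_contract_two_sq_eq_C_mul_prod {c : R} (hc : IsSquare c) {m : Multiset R}
    (hm : ∀ a ∈ m, IsSquare a) :
    ∃ q : R[X], q.natDegree ≤ (C c * (m.map (X + C ·)).prod).natDegree ∧
      contract 2 (q ^ 2) = C c * (m.map (X + C ·)).prod := by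
  induction m using Multiset.induction_on with
  | empty =>
    obtain ⟨s, rfl⟩ := hc.exists_sq
    refine ⟨C s, by simp, ?_⟩
    rw [← C_pow, contract_C, Multiset.map_zero, Multiset.prod_zero, mul_one]
  | cons a m ih =>
    rw [Multiset.forall_mem_cons] at hm
    rw [Multiset.map_cons, Multiset.prod_cons, mul_left_comm]
    exact exists_contract_two_sq_eq_X_add_C_mul hm.1 (ih hm.2)

theorem exists_contract_two_sq_eq_of_splits (hsq : ∀ a : R, IsSquare a) {f : R[X]}
    (hf : f.Splits) : ∃ q : R[X], q.natDegree ≤ f.natDegree ∧ contract 2 (q ^ 2) = f := by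
  obtain ⟨m, hprod⟩ := splits_iff_exists_multiset'.mp hf
  rw [hprod]
  exact exists_contract_two_sq_eq_C_mul_prod (hsq _) fun a _ ↦ hsq a

theorem stmt0_general (hsq : ∀ a : R, IsSquare a) (h : R[X]) (hsplits : (contract 2 h).Splits) :
    ∃ q ρ : R[X], h = q ^ 2 + ρ ∧ 2 * q.natDegree ≤ h.natDegree ∧
      ∀ i : ℕ, Even i → ρ.coeff i = 0 := by
  obtain ⟨q, hdeg, hq⟩ := exists_contract_two_sq_eq_of_splits hsq hsplits
  refine ⟨q, h - q ^ 2, (add_sub_cancel _ _).symm, ?_, ?_⟩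
  · have := natDegree_contract_mul_le 2 h
    omega
  · intro i hi
    obtain ⟨k, rfl⟩ := hi.exists_two_nsmul
    rw [smul_eq_mul, mul_comm, coeff_sub, ← coeff_contract two_ne_zero,
      ← coeff_contract two_ne_zero, hq, sub_self]

end CommRing

/-- Let `F` be an algebraically closed field of characteristic different
from `2`.  Then every nonzero polynomial `h ∈ F[z]` admits a *totally odd part-square
decomposition*: there exist `q, ρ ∈ F[z]` with `h = q² + ρ`, `deg q ≤ ⌈deg h / 2⌉`
(encoded as `2 * deg q ≤ deg h + 1`), and the coefficient of `z^i` in `ρ` equal to `0`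
for every even natural number `i`. -/
theorem stmt0 (F : Type*) [Field F] [IsAlgClosed F] (hchar : (2 : F) ≠ 0)
    (h : F[X]) (hh : h ≠ 0) :
    ∃ q ρ : F[X], h = q ^ 2 + ρ ∧ 2 * q.natDegree ≤ h.natDegree + 1 ∧
      ∀ i : ℕ, Even i → ρ.coeff i = 0 := by
  obtain ⟨q, ρ, hsum, hdeg, hodd⟩ :=
    stmt0_general IsAlgClosed.exists_eq_mul_self h (IsAlgClosed.splits _)
  exact ⟨q, ρ, hsum, hdeg.trans (Nat.le_succ _), hodd⟩
end

section
/- Let h ∈ K̄[z] be nonzero and let h = q² + ρ be a part-square decomposition with v(ρ) − v(h) < 2v(2) (in particular ρ ≠ 0). Then there exists a part-square decomposition h = q̃² + ρ̃ with v(ρ̃) > v(ρ) if and only if a normalized reduction of ρ is the square of a polynomial in k[z]. Consequently, the decomposition h = q² + ρ is good if and only if no normalized reduction of ρ is a square in k[z]. -/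
open Polynomial

/-- The *Gauss valuation* of a polynomial: the minimum of the valuations of its
coefficients (with value `⊤ = +∞` for the zero polynomial). -/
noncomputable def gaussVal {Kbar : Type*} [Field Kbar]
    (v : AddValuation Kbar (WithTop ℚ)) (h : Kbar[X]) : WithTop ℚ :=
  h.support.inf fun i => v (h.coeff i)

/-- `h = q² + ρ` is a *part-square decomposition* of `h`:
`deg q ≤ ⌈deg h / 2⌉`, encoded as `2 * deg q ≤ deg h + 1` (`q = 0` is allowed). -/
def IsPSD {Kbar : Type*} [Field Kbar] (h q ρ : Kbar[X]) : Prop :=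
  h = q ^ 2 + ρ ∧ 2 * q.natDegree ≤ h.natDegree + 1

/-- A part-square decomposition `h = q² + ρ` is *good* if either `v ρ − v h ≥ 2 v 2`,
or `v ρ − v h < 2 v 2` and no part-square decomposition of `h` has strictly larger
Gauss valuation of its remainder. -/
def IsGoodPSD {Kbar : Type*} [Field Kbar] (v : AddValuation Kbar (WithTop ℚ))
    (h q ρ : Kbar[X]) : Prop :=
  IsPSD h q ρ ∧
    (gaussVal v h + (v 2 + v 2) ≤ gaussVal v ρ ∨
      (gaussVal v ρ < gaussVal v h + (v 2 + v 2) ∧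
        ∀ q' ρ' : Kbar[X], IsPSD h q' ρ' → gaussVal v ρ' ≤ gaussVal v ρ))

/-- The residue field of `v` is algebraically closed, encoded via integral lifts:
every monic polynomial of positive degree with integral coefficients has an integral
root modulo the maximal ideal. -/
def ResidueAlgClosed {Kbar : Type*} [Field Kbar]
    (v : AddValuation Kbar (WithTop ℚ)) : Prop :=
  ∀ p : Kbar[X], p.Monic → 0 < p.natDegree → (∀ i, 0 ≤ v (p.coeff i)) →
    ∃ x : Kbar, 0 ≤ v x ∧ 0 < v (p.eval x)

/-!
Any decomposition competing with `h = q² + ρ` has the form `h = (q + d)² + (ρ - d² - 2qd)`, so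
improving it means finding `d` with `v (ρ - d² - 2qd) > v ρ`. If `v h ≤ v ρ`, then `v (q²) ≥ v h`,
and `v ρ < v h + 2 v 2` gives `v ((2q)²) > v ρ`; the cross term `2qd` is then negligible, and an
improvement exists exactly when some `d` satisfies `v (ρ - d²) > v ρ`. If `v ρ < v h`, both hold:
`h = 0² + h` is an improvement and `d = √-1 q` gives `ρ - d² = h`. Dividing `d` by `√γ` for a
scalar `γ` with `v γ = v ρ` turns `v (ρ - d²) > v ρ` into the statement that the reduction of
`γ⁻¹ρ` is a square. The bound on `deg d` comes for free: leading terms of `d` beyond `deg ρ / 2`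
are negligible, because their squares are not cancelled by `ρ`.
-/

section AddValuation

variable {R Γ₀ : Type*} [CommRing R] [LinearOrderedAddCommMonoidWithTop Γ₀] (w : AddValuation R Γ₀)
  {p q d e : R} {r : Γ₀}

lemma le_map_of_le_map_sub (hp : r ≤ w p) (hpq : r ≤ w (p - q)) : r ≤ w q := by
  simpa only [sub_sub_cancel] using w.map_le_sub hp hpq

lemma lt_map_mul_of_le_map_sq_of_lt_map_sq (hp : r ≤ w (p ^ 2)) (hq : r < w (q ^ 2)) :
    r < w (p * q) := by
  by_contra! hle
  have hr : r ≠ ⊤ := hq.ne_top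
  have : r + r < r + r := calc
    r + r < r + w (q ^ 2) := (add_lt_add_iff_right_of_ne_top hr).2 hq
    _ ≤ w (p ^ 2) + w (q ^ 2) := by gcongr
    _ = w (p * q) + w (p * q) := by rw [← w.map_mul, ← w.map_mul, ← mul_pow, sq]
    _ ≤ r + r := by gcongr
  exact this.false

lemma map_nonneg_of_map_sub_sq_nonneg (hp : 0 ≤ w p) (hd : 0 ≤ w (p - d ^ 2)) : 0 ≤ w d := by
  have hd_sq : 0 ≤ w (d ^ 2) := le_map_of_le_map_sub w hp hd
  by_contra! hneg
  have : w (d ^ 2) < 0 := by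
    rw [w.map_pow]
    exact nsmul_neg hneg two_ne_zero
  exact this.not_ge hd_sq

lemma lt_map_sub_sub_sq_of_lt_map_sq (hr : r ≤ w p) (hd : r < w (p - d ^ 2))
    (he : r < w (e ^ 2)) : r < w (p - (d - e) ^ 2) := by
  have hd_sq : r ≤ w (d ^ 2) := le_map_of_le_map_sub w hr hd.le
  have hde : r < w (d * e) := lt_map_mul_of_le_map_sq_of_lt_map_sq w hd_sq he
  rw [show p - (d - e) ^ 2 = (p - d ^ 2) + (d * e + d * e) + -e ^ 2 by ring]
  exact w.map_lt_add (w.map_lt_add hd (w.map_lt_add hde hde)) (by rwa [w.map_neg])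

lemma lt_map_sub_sq_sub_mul_iff (hq : w p < w (q ^ 2)) :
    w p < w (p - d ^ 2 - q * d) ↔ w p < w (p - d ^ 2) := by
  have lt_map_mul (hd : w p ≤ w (d ^ 2)) : w p < w (q * d) := by
    simpa only [mul_comm] using lt_map_mul_of_le_map_sq_of_lt_map_sq w hd hq
  constructor
  · intro h
    have hd : w p ≤ w (d ^ 2) := by
      by_contra! hlt
      have hdq : w (d ^ 2) < w (d * q) :=
        lt_map_mul_of_le_map_sq_of_lt_map_sq w le_rfl (hlt.trans hq)
      have : w (d ^ 2) < w (p + -(p - d ^ 2 - q * d) + -(d * q)) :=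
        w.map_lt_add (w.map_lt_add hlt (by rw [w.map_neg]; exact hlt.trans h))
          (by rwa [w.map_neg])
      rw [show p + -(p - d ^ 2 - q * d) + -(d * q) = d ^ 2 by ring] at this
      exact this.false
    simpa only [sub_add_cancel] using w.map_lt_add h (lt_map_mul hd)
  · intro h
    have hd : w p ≤ w (d ^ 2) := le_map_of_le_map_sub w le_rfl h.le
    rw [sub_eq_add_neg]
    exact w.map_lt_add h (by rw [w.map_neg]; exact lt_map_mul hd)

lemma lt_map_two_mul_sq (hle : w (q ^ 2 + p) ≤ w p)
    (hlt : w p < w (q ^ 2 + p) + (w 2 + w 2)) : w p < w ((2 * q) ^ 2) := by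
  have hq : w (q ^ 2 + p) ≤ w (q ^ 2) := by
    simpa only [add_sub_cancel_right] using w.map_le_sub le_rfl hle
  calc
    w p < w (q ^ 2 + p) + (w 2 + w 2) := hlt
    _ ≤ w (q ^ 2) + (w 2 + w 2) := by gcongr
    _ = w ((2 * q) ^ 2) := by rw [← w.map_mul, ← w.map_mul]; ring_nf

end AddValuation

section GaussValuation

variable {F : Type*} [Field F] (v : AddValuation F (WithTop ℚ)) {p : F[X]} {t : WithTop ℚ}

lemma gaussVal_le_coeff (p : F[X]) (i : ℕ) : gaussVal v p ≤ v (p.coeff i) := by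
  by_cases hi : i ∈ p.support
  · exact Finset.inf_le hi
  · simp [notMem_support_iff.mp hi]

lemma le_gaussVal_iff : t ≤ gaussVal v p ↔ ∀ i, t ≤ v (p.coeff i) :=
  ⟨fun h i => h.trans (gaussVal_le_coeff v p i), fun h => Finset.le_inf fun i _ => h i⟩

lemma lt_gaussVal_iff (ht : t < ⊤) : t < gaussVal v p ↔ ∀ i, t < v (p.coeff i) :=
  ⟨fun h i => h.trans_le (gaussVal_le_coeff v p i),
    fun h => (Finset.lt_inf_iff ht).2 fun i _ => h i⟩

lemma gaussVal_zero : gaussVal v (0 : F[X]) = ⊤ := by simp [gaussVal]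

lemma exists_coeff_eq_gaussVal (p : F[X]) : ∃ i, v (p.coeff i) = gaussVal v p := by
  rcases eq_or_ne p 0 with rfl | hp
  · exact ⟨0, by simp [gaussVal_zero]⟩
  · obtain ⟨i, -, hi⟩ := Finset.exists_mem_eq_inf p.support (nonempty_support_iff.2 hp)
      fun i => v (p.coeff i)
    exact ⟨i, hi.symm⟩

lemma exists_coeff_eq_gaussVal_forall_lt (p : F[X]) :
    ∃ i, v (p.coeff i) = gaussVal v p ∧ ∀ j < i, gaussVal v p < v (p.coeff j) := by
  classical
  have hex := exists_coeff_eq_gaussVal v p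
  exact ⟨Nat.find hex, Nat.find_spec hex, fun j hj =>
    (gaussVal_le_coeff v p j).lt_of_ne (Ne.symm (Nat.find_min hex hj))⟩

lemma gaussVal_monomial (n : ℕ) (c : F) : gaussVal v (monomial n c) = v c := by
  refine le_antisymm (by simpa using gaussVal_le_coeff v (monomial n c) n) ?_
  rw [le_gaussVal_iff]
  intro i
  rw [coeff_monomial]
  split_ifs <;> simp

lemma gaussVal_C (c : F) : gaussVal v (C c) = v c :=
  gaussVal_monomial v 0 c

lemma min_gaussVal_le_add (p q : F[X]) :
    min (gaussVal v p) (gaussVal v q) ≤ gaussVal v (p + q) := by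
  rw [le_gaussVal_iff]
  intro i
  rw [coeff_add]
  exact (min_le_min (gaussVal_le_coeff v p i) (gaussVal_le_coeff v q i)).trans (v.map_add _ _)

lemma gaussVal_add_le_mul (p q : F[X]) :
    gaussVal v p + gaussVal v q ≤ gaussVal v (p * q) := by
  rw [le_gaussVal_iff]
  intro i
  rw [coeff_mul]
  refine v.map_le_sum fun x _ => ?_
  rw [v.map_mul]
  exact add_le_add (gaussVal_le_coeff v p _) (gaussVal_le_coeff v q _)

-- Gauss's lemma: if `i` and `j` are the first indices where the minima are attained, then
-- `p.coeff i * q.coeff j` is the unique term of least valuation in `(p * q).coeff (i + j)`.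
lemma gaussVal_mul_le_add (p q : F[X]) :
    gaussVal v (p * q) ≤ gaussVal v p + gaussVal v q := by
  by_cases htop : gaussVal v p = ⊤ ∨ gaussVal v q = ⊤
  · rcases htop with h | h <;> simp [h]
  obtain ⟨hp, hq⟩ := not_or.1 htop
  obtain ⟨i, hi, hi_lt⟩ := exists_coeff_eq_gaussVal_forall_lt v p
  obtain ⟨j, hj, hj_lt⟩ := exists_coeff_eq_gaussVal_forall_lt v q
  have hij : v (p.coeff i * q.coeff j) = gaussVal v p + gaussVal v q := by
    rw [v.map_mul, hi, hj]
  have hother : v (p.coeff i * q.coeff j) <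
      v (∑ x ∈ (Finset.HasAntidiagonal.antidiagonal (i + j)).erase (i, j),
        p.coeff x.1 * q.coeff x.2) := by
    rw [hij]
    refine v.map_lt_sum (WithTop.add_ne_top.2 ⟨hp, hq⟩) fun x hx => ?_
    obtain ⟨hne, hsum⟩ : x ≠ (i, j) ∧ x.1 + x.2 = i + j := by simpa using hx
    rw [v.map_mul]
    rcases lt_or_ge x.1 i with hlt | hge
    · exact WithTop.add_lt_add_of_lt_of_le hq (hi_lt _ hlt) (gaussVal_le_coeff v q _)
    · have hlt : x.2 < j := by
        by_contra! hle
        exact hne (Prod.ext (by lia) (by lia))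
      exact WithTop.add_lt_add_of_le_of_lt hp (gaussVal_le_coeff v p _) (hj_lt _ hlt)
  calc
    gaussVal v (p * q) ≤ v ((p * q).coeff (i + j)) := gaussVal_le_coeff v _ _
    _ = v (p.coeff i * q.coeff j) := by
      rw [coeff_mul, ← Finset.add_sum_erase _ _ (a := (i, j)) (by simp),
        v.map_add_eq_of_lt_left hother]
    _ = gaussVal v p + gaussVal v q := hij

/-- The Gauss valuation `gaussVal v`, bundled as an additive valuation on `F[X]`, so that the
general facts on additive valuations apply to it. -/
noncomputable def gaussAddVal : AddValuation F[X] (WithTop ℚ) :=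
  AddValuation.of (gaussVal v) (gaussVal_zero v) (by simpa using gaussVal_C v 1)
    (min_gaussVal_le_add v) fun p q =>
      (gaussVal_mul_le_add v p q).antisymm (gaussVal_add_le_mul v p q)

lemma gaussVal_C_mul (c : F) (p : F[X]) : gaussVal v (C c * p) = v c + gaussVal v p := by
  rw [← gaussVal_C v c]
  exact (gaussAddVal v).map_mul _ _

lemma gaussVal_C_inv_mul_pos_iff {γ : F} (hγ : γ ≠ 0) (p : F[X]) :
    0 < gaussVal v (C γ⁻¹ * p) ↔ v γ < gaussVal v p := by
  have hγinv : v γ⁻¹ ≠ ⊤ := (AddValuation.ne_top_iff v).2 (inv_ne_zero hγ)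
  have hzero : v γ⁻¹ + v γ = 0 := by rw [← v.map_mul, inv_mul_cancel₀ hγ, v.map_one]
  rw [gaussVal_C_mul, ← hzero, add_lt_add_iff_right_of_ne_top hγinv]

end GaussValuation

section PartSquare

variable {F : Type*} [Field F] (v : AddValuation F (WithTop ℚ)) {h q ρ : F[X]}

lemma gaussVal_lt_leadingCoeff_sq {d : F[X]} (hd : gaussVal v ρ < gaussVal v (ρ - d ^ 2))
    (hdeg : ρ.natDegree < 2 * d.natDegree) : gaussVal v ρ < v (d.leadingCoeff ^ 2) := by
  have hcoeff : (ρ - d ^ 2).coeff (2 * d.natDegree) = -d.leadingCoeff ^ 2 := by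
    rw [coeff_sub, coeff_eq_zero_of_natDegree_lt hdeg, coeff_pow_mul_natDegree, zero_sub]
  rw [← v.map_neg, ← hcoeff]
  exact hd.trans_le (gaussVal_le_coeff v _ _)

lemma exists_natDegree_le_lt_gaussVal_sub_sq {d : F[X]}
    (hd : gaussVal v ρ < gaussVal v (ρ - d ^ 2)) :
    ∃ t : F[X], 2 * t.natDegree ≤ ρ.natDegree ∧ gaussVal v ρ < gaussVal v (ρ - t ^ 2) := by
  induction hn : d.support.card using Nat.strong_induction_on generalizing d with
  | _ n ih =>
    rcases le_or_gt (2 * d.natDegree) ρ.natDegree with hdeg | hdeg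
    · exact ⟨d, hdeg, hd⟩
    have hd0 : d ≠ 0 := by
      rintro rfl
      simp at hdeg
    have hlead : gaussVal v ρ < gaussVal v (monomial d.natDegree d.leadingCoeff ^ 2) := by
      rw [monomial_pow, gaussVal_monomial]
      exact gaussVal_lt_leadingCoeff_sq v hd hdeg
    refine ih _ (hn ▸ eraseLead_support_card_lt hd0) ?_ rfl
    rw [← self_sub_monomial_natDegree_leadingCoeff]
    exact lt_map_sub_sub_sq_of_lt_map_sq (gaussAddVal v) le_rfl hd hlead

lemma IsPSD.natDegree_le (hpsd : IsPSD h q ρ) : ρ.natDegree ≤ h.natDegree + 1 := by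
  rw [← sub_eq_of_eq_add' hpsd.1]
  refine (natDegree_sub_le _ _).trans (max_le (Nat.le_succ _) ?_)
  rw [natDegree_pow]
  exact hpsd.2

lemma IsPSD.add (hpsd : IsPSD h q ρ) {t : F[X]} (ht : 2 * t.natDegree ≤ ρ.natDegree) :
    IsPSD h (q + t) (ρ - t ^ 2 - 2 * q * t) := by
  refine ⟨by rw [hpsd.1]; ring, ?_⟩
  have hq := hpsd.2
  have hρ := hpsd.natDegree_le
  have hadd := natDegree_add_le q t
  lia

theorem IsPSD.exists_lt_gaussVal_iff_sub_sq (hneg : IsSquare (-1 : F)) (hpsd : IsPSD h q ρ)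
    (ht : gaussVal v ρ < gaussVal v h + (v 2 + v 2)) :
    (∃ q' ρ' : F[X], IsPSD h q' ρ' ∧ gaussVal v ρ < gaussVal v ρ') ↔
      ∃ d : F[X], gaussVal v ρ < gaussVal v (ρ - d ^ 2) := by
  rcases lt_or_ge (gaussVal v ρ) (gaussVal v h) with hlt | hle
  · obtain ⟨ι, hι⟩ := hneg
    have hιq : ρ - (C ι * q) ^ 2 = h := by
      rw [mul_pow, ← C_pow, sq ι, ← hι, hpsd.1, C_neg, C_1]
      ring
    exact iff_of_true ⟨0, h, ⟨by simp, by simp⟩, hlt⟩ ⟨C ι * q, by rwa [hιq]⟩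
  · have h2q : gaussVal v ρ < gaussVal v ((2 * q) ^ 2) := by
      rw [hpsd.1] at hle ht
      exact lt_map_two_mul_sq (gaussAddVal v) hle (by rwa [← gaussVal_C v 2] at ht)
    have cross_iff (d : F[X]) := lt_map_sub_sq_sub_mul_iff (gaussAddVal v) (d := d) h2q
    constructor
    · rintro ⟨q', ρ', hpsd', hlt⟩
      have hρ' : ρ' = ρ - (q' - q) ^ 2 - 2 * q * (q' - q) := by
        linear_combination hpsd.1 - hpsd'.1
      exact ⟨q' - q, (cross_iff _).1 (hρ' ▸ hlt)⟩
    · rintro ⟨d, hd⟩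
      obtain ⟨t, htdeg, ht_lt⟩ := exists_natDegree_le_lt_gaussVal_sub_sq v hd
      exact ⟨_, _, hpsd.add htdeg, (cross_iff t).2 ht_lt⟩

theorem exists_sq_reduction_iff {γ : F} (hsq : IsSquare γ) (hγ0 : γ ≠ 0)
    (hγ : v γ = gaussVal v ρ) :
    (∃ s : F[X], (∀ i, 0 ≤ v (s.coeff i)) ∧ ∀ i, 0 < v ((C γ⁻¹ * ρ - s ^ 2).coeff i)) ↔
      ∃ d : F[X], gaussVal v ρ < gaussVal v (ρ - d ^ 2) := by
  obtain ⟨δ, rfl⟩ := hsq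
  have hδ0 : δ ≠ 0 := left_ne_zero_of_mul hγ0
  have scale (d : F[X]) :
      C (δ * δ)⁻¹ * ρ - (C δ⁻¹ * d) ^ 2 = C (δ * δ)⁻¹ * (ρ - d ^ 2) := by
    rw [mul_inv, C_mul]
    ring
  have scale_iff (d : F[X]) :
      0 < gaussVal v (C (δ * δ)⁻¹ * ρ - (C δ⁻¹ * d) ^ 2) ↔
        gaussVal v ρ < gaussVal v (ρ - d ^ 2) := by
    rw [scale, gaussVal_C_inv_mul_pos_iff v hγ0, hγ]
  have hρ : gaussVal v (C (δ * δ)⁻¹ * ρ) = 0 := by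
    rw [gaussVal_C_mul, ← hγ, ← v.map_mul, inv_mul_cancel₀ hγ0, v.map_one]
  simp only [← le_gaussVal_iff, ← lt_gaussVal_iff v WithTop.top_pos]
  constructor
  · rintro ⟨s, -, hs⟩
    have hδs : C δ⁻¹ * (C δ * s) = s := by
      rw [← mul_assoc, ← C_mul, inv_mul_cancel₀ hδ0, C_1, one_mul]
    exact ⟨C δ * s, (scale_iff _).1 (by rwa [hδs])⟩
  · rintro ⟨d, hd⟩
    have hs := (scale_iff d).2 hd
    exact ⟨C δ⁻¹ * d, map_nonneg_of_map_sub_sq_nonneg (gaussAddVal v) hρ.ge hs.le, hs⟩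

theorem IsPSD.isGoodPSD_iff (hpsd : IsPSD h q ρ)
    (ht : gaussVal v ρ < gaussVal v h + (v 2 + v 2)) :
    IsGoodPSD v h q ρ ↔
      ¬∃ q' ρ' : F[X], IsPSD h q' ρ' ∧ gaussVal v ρ < gaussVal v ρ' := by
  simp only [IsGoodPSD, hpsd, ht, ht.not_ge, true_and, false_or, not_exists, not_and, not_lt]

end PartSquare

theorem stmt1_general {F : Type*} [Field F] (v : AddValuation F (WithTop ℚ))
    (hsq : ∀ x : F, IsSquare x) {h q ρ : F[X]} (hpsd : IsPSD h q ρ)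
    (ht : gaussVal v ρ < gaussVal v h + (v 2 + v 2)) :
    ((∃ q' ρ' : F[X], IsPSD h q' ρ' ∧ gaussVal v ρ < gaussVal v ρ') ↔
      ∃ γ : F, v γ = gaussVal v ρ ∧
        ∃ s : F[X], (∀ i, 0 ≤ v (s.coeff i)) ∧
          ∀ i, 0 < v ((C γ⁻¹ * ρ - s ^ 2).coeff i)) ∧
    (IsGoodPSD v h q ρ ↔
      ∀ γ : F, v γ = gaussVal v ρ →
        ¬∃ s : F[X], (∀ i, 0 ≤ v (s.coeff i)) ∧
          ∀ i, 0 < v ((C γ⁻¹ * ρ - s ^ 2).coeff i)) := by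
  have reduction_iff (γ : F) (hγ : v γ = gaussVal v ρ) :=
    exists_sq_reduction_iff v (hsq γ) ((AddValuation.ne_top_iff v).1 (hγ ▸ ht.ne_top)) hγ
  obtain ⟨i, hi⟩ := exists_coeff_eq_gaussVal v ρ
  have improvable_iff :
      (∃ q' ρ' : F[X], IsPSD h q' ρ' ∧ gaussVal v ρ < gaussVal v ρ') ↔
        ∃ γ : F, v γ = gaussVal v ρ ∧
          ∃ s : F[X], (∀ i, 0 ≤ v (s.coeff i)) ∧ ∀ i, 0 < v ((C γ⁻¹ * ρ - s ^ 2).coeff i) := by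
    rw [hpsd.exists_lt_gaussVal_iff_sub_sq v (hsq (-1)) ht]
    exact ⟨fun hd => ⟨_, hi, (reduction_iff _ hi).2 hd⟩,
      fun ⟨γ, hγ, hs⟩ => (reduction_iff γ hγ).1 hs⟩
  refine ⟨improvable_iff, ?_⟩
  rw [hpsd.isGoodPSD_iff v ht, improvable_iff]
  simp only [not_exists, not_and]

/-- Let `h ∈ K̄[z]` be nonzero with a part-square decomposition
`h = q² + ρ` satisfying `v ρ − v h < 2 v 2`.  Then there is a part-square decomposition
`h = q̃² + ρ̃` with `v ρ̃ > v ρ` iff a normalized reduction of `ρ` is the square of a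
polynomial over the residue field (encoded via an integral lift `s`); consequently the
decomposition is good iff no normalized reduction of `ρ` is such a square. -/
theorem stmt1 {Kbar : Type*} [Field Kbar] [IsAlgClosed Kbar]
    (v : AddValuation Kbar (WithTop ℚ)) (hchar : (2 : Kbar) ≠ 0)
    (hres : ResidueAlgClosed v)
    (h q ρ : Kbar[X]) (hh : h ≠ 0) (hpsd : IsPSD h q ρ)
    (ht : gaussVal v ρ < gaussVal v h + (v 2 + v 2)) :
    ((∃ q' ρ' : Kbar[X], IsPSD h q' ρ' ∧ gaussVal v ρ < gaussVal v ρ') ↔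
      ∃ γ : Kbar, v γ = gaussVal v ρ ∧
        ∃ s : Kbar[X], (∀ i, 0 ≤ v (s.coeff i)) ∧
          ∀ i, 0 < v ((C γ⁻¹ * ρ - s ^ 2).coeff i)) ∧
    (IsGoodPSD v h q ρ ↔
      ∀ γ : Kbar, v γ = gaussVal v ρ →
        ¬∃ s : Kbar[X], (∀ i, 0 ≤ v (s.coeff i)) ∧
          ∀ i, 0 < v ((C γ⁻¹ * ρ - s ^ 2).coeff i)) :=
  stmt1_general v (fun x => IsAlgClosed.exists_eq_mul_self x) hpsd ht
end

section
/- Let h ∈ K̄[z] be nonzero and let h = q² + ρ be a totally odd part-square decomposition (every nonzero term of ρ has odd degree). Then this decomposition is good; that is, either v(ρ) − v(h) ≥ 2v(2), or there is no part-square decomposition h = q̃² + ρ̃ with v(ρ̃) > v(ρ). -/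
open Polynomial

/-!
By Gauss's lemma the Gauss valuation `w` is a valuation on polynomials, and `w (p ^ 2)` is attained
at a coefficient of even degree, which a totally odd `ρ` cannot affect: hence
`w (p ^ 2 + ρ) = min (w (p ^ 2)) (w ρ)`. Suppose `h = q ^ 2 + ρ = q' ^ 2 + ρ'` with `w ρ < w ρ'`,
and put `d = q' - q`. Taking valuations in `d ^ 2 - ρ = -(ρ' + 2 * q * d)` bounds `w (2 * q * d)`
by both `w (d ^ 2)` and `w ρ`. The first bound gives `w (2 * q) ≤ w d`, so the second gives
`w ρ ≥ 2 * w (2 * q)`, and `w (q ^ 2) ≥ w h`.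
-/

section Gauss

variable {R Γ : Type*} [Ring R] [LinearOrderedAddCommMonoidWithTop Γ] (v : AddValuation R Γ)

/-- The function underlying the Gauss valuation `gaussAddValuation v`: the infimum of the values of
the coefficients. It is `gaussVal v` without restriction on the ring and the value monoid. -/
def coeffInf (p : R[X]) : Γ :=
  p.support.inf fun i => v (p.coeff i)

variable {v} in
theorem le_coeffInf_iff {p : R[X]} {a : Γ} : a ≤ coeffInf v p ↔ ∀ i, a ≤ v (p.coeff i) := by
  refine Finset.le_inf_iff.trans ⟨fun H i => ?_, fun H i _ => H i⟩
  by_cases hi : i ∈ p.support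
  · exact H i hi
  · simp [notMem_support_iff.1 hi]

theorem coeffInf_le (p : R[X]) (i : ℕ) : coeffInf v p ≤ v (p.coeff i) :=
  le_coeffInf_iff.1 le_rfl i

theorem exists_coeff_eq_coeffInf (p : R[X]) : ∃ i, v (p.coeff i) = coeffInf v p := by
  obtain rfl | hp := eq_or_ne p 0
  · exact ⟨0, by simp [coeffInf]⟩
  · obtain ⟨i, -, hi⟩ := Finset.exists_mem_eq_inf p.support (support_nonempty.2 hp)
      fun i => v (p.coeff i)
    exact ⟨i, hi.symm⟩

theorem coeffInf_C (a : R) : coeffInf v (C a) = v a := by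
  refine le_antisymm (by simpa using coeffInf_le v (C a) 0) (le_coeffInf_iff.2 fun i => ?_)
  rw [coeff_C]
  split_ifs <;> simp

theorem min_coeffInf_le_add (p q : R[X]) :
    min (coeffInf v p) (coeffInf v q) ≤ coeffInf v (p + q) :=
  le_coeffInf_iff.2 fun i => by
    rw [coeff_add]
    exact (min_le_min (coeffInf_le v p i) (coeffInf_le v q i)).trans (v.map_add _ _)

theorem coeffInf_add_le_mul (p q : R[X]) :
    coeffInf v p + coeffInf v q ≤ coeffInf v (p * q) :=
  le_coeffInf_iff.2 fun i => by
    rw [coeff_mul]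
    refine v.map_le_sum fun x _ => ?_
    rw [v.map_mul]
    exact add_le_add (coeffInf_le v p _) (coeffInf_le v q _)

open Classical in
/-- The least degree in which a polynomial has a coefficient of minimal value. If `p` and `q` both
have finite minimal value, then the coefficient of `p * q` in degree
`gaussIndex v p + gaussIndex v q` has exactly one summand of minimal value. -/
noncomputable def gaussIndex (p : R[X]) : ℕ :=
  Nat.find (exists_coeff_eq_coeffInf v p)

theorem val_coeff_gaussIndex (p : R[X]) : v (p.coeff (gaussIndex v p)) = coeffInf v p := by
  classical exact Nat.find_spec (exists_coeff_eq_coeffInf v p)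

variable {v} in
theorem coeffInf_lt_of_lt_gaussIndex {p : R[X]} {i : ℕ} (hi : i < gaussIndex v p) :
    coeffInf v p < v (p.coeff i) := by
  classical exact (coeffInf_le v p i).lt_of_ne' (Nat.find_min (exists_coeff_eq_coeffInf v p) hi)

variable {v} in
theorem coeffInf_add_lt_val_mul_coeff {p q : R[X]} (hp : coeffInf v p ≠ ⊤)
    (hq : coeffInf v q ≠ ⊤) {a b : ℕ} (hab : a + b = gaussIndex v p + gaussIndex v q)
    (hne : a ≠ gaussIndex v p) :
    coeffInf v p + coeffInf v q < v (p.coeff a * q.coeff b) := by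
  rw [v.map_mul]
  obtain ha | hb : a < gaussIndex v p ∨ b < gaussIndex v q := by lia
  · calc coeffInf v p + coeffInf v q < v (p.coeff a) + coeffInf v q :=
          (add_lt_add_iff_left_of_ne_top hq).2 (coeffInf_lt_of_lt_gaussIndex ha)
      _ ≤ v (p.coeff a) + v (q.coeff b) := by gcongr; exact coeffInf_le v q b
  · calc coeffInf v p + coeffInf v q < coeffInf v p + v (q.coeff b) :=
          (add_lt_add_iff_right_of_ne_top hp).2 (coeffInf_lt_of_lt_gaussIndex hb)
      _ ≤ v (p.coeff a) + v (q.coeff b) := by gcongr; exact coeffInf_le v p a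

theorem val_coeff_mul_gaussIndex_add (p q : R[X]) :
    v ((p * q).coeff (gaussIndex v p + gaussIndex v q)) = coeffInf v p + coeffInf v q := by
  by_cases htop : coeffInf v p + coeffInf v q = ⊤
  · exact ((coeffInf_add_le_mul v p q).trans (coeffInf_le v _ _)).antisymm' (htop ▸ le_top)
  have hp : coeffInf v p ≠ ⊤ := fun h => htop (by rw [h, top_add])
  have hq : coeffInf v q ≠ ⊤ := fun h => htop (by rw [h, add_top])
  have hterm : v (p.coeff (gaussIndex v p) * q.coeff (gaussIndex v q)) =
      coeffInf v p + coeffInf v q := by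
    rw [v.map_mul, val_coeff_gaussIndex, val_coeff_gaussIndex]
  have hmem : (gaussIndex v p, gaussIndex v q) ∈
      Finset.HasAntidiagonal.antidiagonal (gaussIndex v p + gaussIndex v q) := by
    rw [Finset.HasAntidiagonal.mem_antidiagonal]
  rw [coeff_mul, ← Finset.add_sum_erase _ _ hmem, ← hterm]
  refine v.map_add_eq_of_lt_left ?_
  rw [hterm]
  refine v.map_lt_sum htop fun ⟨a, b⟩ hab => ?_
  obtain ⟨hne, hab⟩ := Finset.mem_erase.1 hab
  rw [Finset.HasAntidiagonal.mem_antidiagonal] at hab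
  exact coeffInf_add_lt_val_mul_coeff hp hq hab
    fun ha => hne (Prod.ext ha (by dsimp only at ha hab ⊢; lia))

theorem coeffInf_mul (p q : R[X]) : coeffInf v (p * q) = coeffInf v p + coeffInf v q :=
  ((coeffInf_le v _ _).trans_eq (val_coeff_mul_gaussIndex_add v p q)).antisymm
    (coeffInf_add_le_mul v p q)

/-- The *Gauss valuation*: the extension of `v` to polynomials by the minimum of the values of the
coefficients. -/
noncomputable def gaussAddValuation : AddValuation R[X] Γ :=
  .of (coeffInf v) (by simp [coeffInf]) (by rw [← C_1, coeffInf_C, v.map_one])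
    (min_coeffInf_le_add v) (coeffInf_mul v)

theorem gaussAddValuation_le (p : R[X]) (i : ℕ) : gaussAddValuation v p ≤ v (p.coeff i) :=
  coeffInf_le v p i

theorem gaussAddValuation_two : gaussAddValuation v 2 = v 2 :=
  coeffInf_C v 2

theorem exists_even_val_coeff_sq_eq (p : R[X]) :
    ∃ i, Even i ∧ v ((p ^ 2).coeff i) = gaussAddValuation v (p ^ 2) :=
  ⟨gaussIndex v p + gaussIndex v p, Even.add_self _, by
    rw [sq, AddValuation.map_mul]
    exact val_coeff_mul_gaussIndex_add v p p⟩

theorem gaussAddValuation_sq_add_of_coeff_even_eq_zero (p : R[X]) {ρ : R[X]}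
    (hodd : ∀ i, Even i → ρ.coeff i = 0) :
    gaussAddValuation v (p ^ 2 + ρ) =
      min (gaussAddValuation v (p ^ 2)) (gaussAddValuation v ρ) := by
  have hsq : gaussAddValuation v (p ^ 2 + ρ) ≤ gaussAddValuation v (p ^ 2) := by
    obtain ⟨i, hi, hval⟩ := exists_even_val_coeff_sq_eq v p
    rw [← hval, show (p ^ 2).coeff i = (p ^ 2 + ρ).coeff i by rw [coeff_add, hodd i hi, add_zero]]
    exact gaussAddValuation_le v (p ^ 2 + ρ) i
  have hρ : gaussAddValuation v (p ^ 2 + ρ) ≤ gaussAddValuation v ρ := by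
    simpa using (gaussAddValuation v).map_le_sub le_rfl hsq
  exact (le_min hsq hρ).antisymm ((gaussAddValuation v).map_add _ _)

end Gauss

section PartSquare

variable {R Γ : Type*} [CommRing R] [LinearOrderedAddCommMonoidWithTop Γ]

theorem val_two_mul_add_self_le_of_sq_add_eq_sq_add (w : AddValuation R Γ) {q ρ q' ρ' : R}
    (heq : q ^ 2 + ρ = q' ^ 2 + ρ')
    (hmin : w ((q' - q) ^ 2 - ρ) ≤ min (w ((q' - q) ^ 2)) (w ρ)) (hlt : w ρ < w ρ') :
    w (2 * q) + w (2 * q) ≤ w ρ := by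
  obtain ⟨d, rfl⟩ : ∃ d, q' = q + d := ⟨q' - q, by ring⟩
  rw [add_sub_cancel_left, show d ^ 2 - ρ = -(ρ' + 2 * q * d) by linear_combination -heq,
    w.map_neg] at hmin
  obtain ⟨hle_sq, hle_ρ⟩ := le_min_iff.1 ((w.map_add _ _).trans hmin)
  have hcross_le_ρ : w (2 * q * d) ≤ w ρ := (min_le_iff.1 hle_ρ).resolve_left hlt.not_ge
  have hcross_le_sq : w (2 * q * d) ≤ w (d ^ 2) := by
    rwa [min_eq_right (hcross_le_ρ.trans hlt.le)] at hle_sq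
  rw [w.map_mul (2 * q)] at hcross_le_ρ
  have hd : w d ≠ ⊤ := fun htop => by
    rw [htop, add_top, top_le_iff] at hcross_le_ρ
    exact hlt.not_ge (hcross_le_ρ ▸ le_top)
  have hle : w (2 * q) ≤ w d := by
    rwa [w.map_mul (2 * q), sq, w.map_mul d, add_le_add_iff_left_of_ne_top hd] at hcross_le_sq
  calc w (2 * q) + w (2 * q) ≤ w (2 * q) + w d := by gcongr
    _ ≤ w ρ := hcross_le_ρ

theorem stmt3_general (v : AddValuation R Γ) {h q ρ : R[X]} (hq : h = q ^ 2 + ρ)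
    (hodd : ∀ i, Even i → ρ.coeff i = 0) :
    gaussAddValuation v h + (v 2 + v 2) ≤ gaussAddValuation v ρ ∨
      ∀ q' ρ' : R[X], h = q' ^ 2 + ρ' → gaussAddValuation v ρ' ≤ gaussAddValuation v ρ := by
  by_contra! hcon
  obtain ⟨hlt_h, q', ρ', hq', hlt⟩ := hcon
  refine hlt_h.not_ge ?_
  set w := gaussAddValuation v
  have hmin : w ((q' - q) ^ 2 - ρ) ≤ min (w ((q' - q) ^ 2)) (w ρ) := by
    rw [sub_eq_add_neg, ← w.map_neg ρ]
    exact (gaussAddValuation_sq_add_of_coeff_even_eq_zero v _ (by simpa using hodd)).le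
  have hsq : w h ≤ w q + w q := by
    rw [← w.map_mul, ← sq, hq, gaussAddValuation_sq_add_of_coeff_even_eq_zero v q hodd]
    exact min_le_left _ _
  calc w h + (v 2 + v 2) ≤ w q + w q + (v 2 + v 2) := by gcongr
    _ = w (2 * q) + w (2 * q) := by
      rw [w.map_mul, gaussAddValuation_two, add_comm, add_add_add_comm]
    _ ≤ w ρ := val_two_mul_add_self_le_of_sq_add_eq_sq_add w (hq.symm.trans hq') hmin hlt

end PartSquare

theorem gaussAddValuation_eq_gaussVal {F : Type*} [Field F] (v : AddValuation F (WithTop ℚ))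
    (p : F[X]) : gaussAddValuation v p = gaussVal v p :=
  rfl

/-- A totally odd part-square decomposition `h = q² + ρ` of a nonzero
polynomial is good: either `v ρ − v h ≥ 2 v 2`, or there is no part-square decomposition
`h = q̃² + ρ̃` with `v ρ̃ > v ρ`. -/
theorem stmt3 {Kbar : Type*} [Field Kbar] [IsAlgClosed Kbar]
    (v : AddValuation Kbar (WithTop ℚ)) (hchar : (2 : Kbar) ≠ 0)
    (h q ρ : Kbar[X]) (hh : h ≠ 0) (hpsd : IsPSD h q ρ)
    (hodd : ∀ i : ℕ, Even i → ρ.coeff i = 0) :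
    gaussVal v h + (v 2 + v 2) ≤ gaussVal v ρ ∨
      ∀ q' ρ' : Kbar[X], IsPSD h q' ρ' → gaussVal v ρ' ≤ gaussVal v ρ := by
  simp only [← gaussAddValuation_eq_gaussVal]
  exact (stmt3_general v hpsd.1 hodd).imp_right fun hmax q' ρ' hpsd' => hmax q' ρ' hpsd'.1
end

section
/- Let h ∈ K̄[z] be nonzero, α ∈ K̄, β ∈ K̄× and b := v(β). Assume that the number of roots ζ of h in K̄, counted with multiplicity, satisfying v(ζ − α) > b is odd, or that the number of such roots satisfying v(ζ − α) ≥ b is odd. Then every part-square decomposition h(βz + α) = q² + ρ satisfies v(ρ) ≤ v(h(βz + α)); equivalently, the trivial decomposition h(βz + α) = 0² + h(βz + α) is good. -/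
open Polynomial

/-!
Call `i` extremal for `f` if it is the first (or, in a second version, the last) index at which the
coefficients of `f` attain their least valuation. As with orders and degrees, extremal indices add
up under multiplication, and they do not change when `f` is perturbed by a polynomial of larger
Gauss valuation. The linear factor `βz + α - ζ` has first extremal index `1` exactly when
`v β < v (ζ - α)`, and last extremal index `1` exactly when `v β ≤ v (ζ - α)`; so the two root
counts are the first and the last extremal index of `g = h(βz + α)`. If `g = q² + ρ` with
`v ρ > v g`, these are also the extremal indices of `q²`, hence even.
-/

section ExtremalIndex

variable {R Γ₀ : Type*} [Ring R] [LinearOrderedAddCommMonoidWithTop Γ₀]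

/-- `i` is the extremal index of `f`: the first (for `ε > 0`) or the last (for `ε < 0`) index at
which the coefficients of `f` attain their least valuation, which is required to be finite. The
integer `ε` encodes the direction so that both versions are treated at once. -/
structure IsExtremalIndex (v : AddValuation R Γ₀) (ε : ℤ) (f : R[X]) (i : ℕ) : Prop where
  ne_top : v (f.coeff i) ≠ ⊤
  le (j : ℕ) : v (f.coeff i) ≤ v (f.coeff j)
  lt {j : ℕ} : ε * j < ε * i → v (f.coeff i) < v (f.coeff j)

theorem support_inf_val_le_coeff (v : AddValuation R Γ₀) (f : R[X]) (j : ℕ) :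
    (f.support.inf fun i => v (f.coeff i)) ≤ v (f.coeff j) := by
  by_cases hj : f.coeff j = 0
  · simp [hj]
  · exact Finset.inf_le (f := fun i => v (f.coeff i)) (mem_support_iff.2 hj)

theorem exists_isExtremalIndex (v : AddValuation R Γ₀) (ε : ℤ) {f : R[X]} {k : ℕ}
    (hk : v (f.coeff k) ≠ ⊤) : ∃ i, IsExtremalIndex v ε f i := by
  have hsupp : f.support.Nonempty := ⟨k, mem_support_iff.2 fun h0 => hk (by simp [h0])⟩
  obtain ⟨i, -, hmin⟩ :=
    f.support.exists_min_image (fun i => toLex (v (f.coeff i), ε * (i : ℤ))) hsupp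
  have hle (j : ℕ) : v (f.coeff i) ≤ v (f.coeff j) := by
    by_cases hj : f.coeff j = 0
    · simp [hj]
    · exact (Prod.Lex.toLex_le_toLex'.1 (hmin j (mem_support_iff.2 hj))).1
  have hi : v (f.coeff i) ≠ ⊤ := ne_top_of_le_ne_top hk (hle k)
  refine ⟨i, hi, hle, fun {j} hj => lt_of_le_of_ne (hle j) fun heq => hj.not_ge ?_⟩
  have hmem : j ∈ f.support := mem_support_iff.2 fun h0 => hi (by simp [heq, h0])
  exact (Prod.Lex.toLex_le_toLex'.1 (hmin j hmem)).2 heq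

theorem isExtremalIndex_C {v : AddValuation R Γ₀} (ε : ℤ) {c : R} (hc : v c ≠ ⊤) :
    IsExtremalIndex v ε (C c) 0 where
  ne_top := by simpa using hc
  le j := by rcases j with _ | j <;> simp [coeff_C]
  lt {j} hj := by
    rcases j with _ | j
    · simp at hj
    · simpa [coeff_C] using hc.lt_top

-- Extremal indices minimize `(v (f.coeff i), ε * i)` lexicographically.
theorem isExtremalIndex_C_mul_X_add_C {v : AddValuation R Γ₀} (ε : ℤ) {β : R} (γ : R)
    (hβ : v β ≠ ⊤) :
    IsExtremalIndex v ε (C β * X + C γ)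
      (if toLex (v β, ε) < toLex (v γ, 0) then 1 else 0) := by
  have coeff_zero : (C β * X + C γ).coeff 0 = γ := by simp
  have coeff_one : (C β * X + C γ).coeff 1 = β := by simp [coeff_C]
  have coeff_add_two (j : ℕ) : (C β * X + C γ).coeff (j + 2) = 0 := by simp
  split_ifs with hlex
  · obtain ⟨hle, hlt⟩ := Prod.Lex.toLex_lt_toLex'.1 hlex
    refine ⟨by rwa [coeff_one], fun j => ?_, fun {j} hj => ?_⟩
    · rcases j with _ | _ | j <;> simp [coeff_zero, coeff_one, coeff_add_two, hle]
    · rcases j with _ | _ | j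
      · have hε : 0 < ε := by simpa using hj
        simpa [coeff_zero, coeff_one] using hle.lt_of_ne fun heq => (hlt heq).not_gt hε
      · simp at hj
      · simpa [coeff_one, coeff_add_two] using hβ.lt_top
  · obtain ⟨hle, hlt⟩ := Prod.Lex.toLex_le_toLex'.1 (not_lt.1 hlex)
    have hγ : v γ ≠ ⊤ := ne_top_of_le_ne_top hβ hle
    refine ⟨by rwa [coeff_zero], fun j => ?_, fun {j} hj => ?_⟩
    · rcases j with _ | _ | j <;> simp [coeff_zero, coeff_one, coeff_add_two, hle]
    · rcases j with _ | _ | j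
      · simp at hj
      · have hε : ε < 0 := by simpa using hj
        simpa [coeff_zero, coeff_one] using hle.lt_of_ne fun heq => (hlt heq).not_gt hε
      · simpa [coeff_zero, coeff_add_two] using hγ.lt_top

namespace IsExtremalIndex

variable {v : AddValuation R Γ₀} {ε : ℤ} {f r : R[X]} {i j : ℕ}

theorem unique (hε : ε ≠ 0) (hi : IsExtremalIndex v ε f i) (hj : IsExtremalIndex v ε f j) :
    i = j := by
  have hle_left : ε * (i : ℤ) ≤ ε * j := not_lt.1 fun h => (hi.lt h).not_ge (hj.le i)
  have hle_right : ε * (j : ℤ) ≤ ε * i := not_lt.1 fun h => (hj.lt h).not_ge (hi.le j)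
  exact_mod_cast mul_left_cancel₀ hε (hle_left.antisymm hle_right)

theorem sub (hf : IsExtremalIndex v ε f i) (hr : ∀ j, v (f.coeff i) < v (r.coeff j)) :
    IsExtremalIndex v ε (f - r) i := by
  have hval : v ((f - r).coeff i) = v (f.coeff i) := by
    rw [coeff_sub, v.map_sub_eq_of_lt_left (hr i)]
  refine ⟨hval ▸ hf.ne_top, fun j => ?_, fun {j} hj => ?_⟩
  · rw [hval, coeff_sub]
    exact v.map_le_sub (hf.le j) (hr j).le
  · rw [hval, coeff_sub]
    exact (lt_min (hf.lt hj) (hr j)).trans_le (v.map_sub _ _)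

end IsExtremalIndex

end ExtremalIndex

section Multiplicativity

open Finset.HasAntidiagonal (antidiagonal mem_antidiagonal)
open LinearOrderedAddCommGroupWithTop (add_ne_top)

variable {R Γ₀ : Type*} [Ring R] [LinearOrderedAddCommGroupWithTop Γ₀]

namespace IsExtremalIndex

variable {v : AddValuation R Γ₀} {ε : ℤ} {f g q ρ : R[X]} {i j : ℕ}

theorem add_lt_val_mul (hf : IsExtremalIndex v ε f i) (hg : IsExtremalIndex v ε g j) {s t : ℕ}
    (hst : ε * s < ε * i ∨ ε * t < ε * j) :
    v (f.coeff i) + v (g.coeff j) < v (f.coeff s * g.coeff t) := by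
  rw [v.map_mul]
  rcases hst with hs | ht
  · exact ((add_lt_add_iff_left_of_ne_top hg.ne_top).2 (hf.lt hs)).trans_le
      (add_le_add_right (hg.le t) _)
  · exact ((add_lt_add_iff_right_of_ne_top hf.ne_top).2 (hg.lt ht)).trans_le
      (add_le_add_left (hf.le s) _)

theorem val_coeff_mul (hε : ε ≠ 0) (hf : IsExtremalIndex v ε f i)
    (hg : IsExtremalIndex v ε g j) :
    v ((f * g).coeff (i + j)) = v (f.coeff i) + v (g.coeff j) := by
  have hother : ∀ p ∈ (antidiagonal (i + j)).erase (i, j),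
      v (f.coeff i) + v (g.coeff j) < v (f.coeff p.1 * g.coeff p.2) := by
    rintro ⟨s, t⟩ hst
    obtain ⟨hne, hsum⟩ := Finset.mem_erase.1 hst
    rw [mem_antidiagonal] at hsum
    refine hf.add_lt_val_mul hg ?_
    by_contra! hge
    have hweight : ε * (i : ℤ) + ε * j = ε * s + ε * t := by
      rw [← mul_add, ← mul_add]
      exact_mod_cast congrArg (fun n : ℕ => ε * (n : ℤ)) hsum.symm
    obtain ⟨hs, ht⟩ := (add_eq_add_iff_eq_and_eq hge.1 hge.2).1 hweight
    refine hne (Prod.ext ?_ ?_)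
    · exact_mod_cast (mul_left_cancel₀ hε hs).symm
    · exact_mod_cast (mul_left_cancel₀ hε ht).symm
  have hrest := v.map_lt_sum (add_ne_top.2 ⟨hf.ne_top, hg.ne_top⟩) hother
  rw [coeff_mul, ← Finset.add_sum_erase _ _ (show (i, j) ∈ _ from mem_antidiagonal.2 rfl),
    v.map_add_eq_of_lt_left (by rwa [v.map_mul]), v.map_mul]

theorem mul (hε : ε ≠ 0) (hf : IsExtremalIndex v ε f i) (hg : IsExtremalIndex v ε g j) :
    IsExtremalIndex v ε (f * g) (i + j) := by
  have hval := hf.val_coeff_mul hε hg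
  have hne : v (f.coeff i) + v (g.coeff j) ≠ ⊤ := add_ne_top.2 ⟨hf.ne_top, hg.ne_top⟩
  refine ⟨hval ▸ hne, fun k => ?_, fun {k} hk => ?_⟩
  · rw [hval, coeff_mul]
    refine v.map_le_sum fun p _ => ?_
    rw [v.map_mul]
    exact add_le_add (hf.le p.1) (hg.le p.2)
  · rw [hval, coeff_mul]
    refine v.map_lt_sum hne fun p hp => hf.add_lt_val_mul hg (lt_or_lt_of_add_lt_add ?_)
    rw [← mul_add, ← mul_add]
    exact_mod_cast mem_antidiagonal.1 hp ▸ hk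

theorem even_of_mul_self (hε : ε ≠ 0) (hq : IsExtremalIndex v ε (q * q) i) : Even i := by
  obtain ⟨k, hk⟩ : ∃ k, v (q.coeff k) ≠ ⊤ := by
    by_contra! htop
    refine hq.ne_top (top_le_iff.1 ?_)
    rw [coeff_mul]
    exact v.map_le_sum fun p _ => by simp [htop]
  obtain ⟨j, hj⟩ := exists_isExtremalIndex v ε hk
  exact ⟨j, hq.unique hε (hj.mul hε hj)⟩

theorem support_inf_val_le_of_odd (hε : ε ≠ 0) (hf : IsExtremalIndex v ε f i) (hi : Odd i)
    (hsq : f = q ^ 2 + ρ) :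
    (ρ.support.inf fun j => v (ρ.coeff j)) ≤ f.support.inf fun j => v (f.coeff j) := by
  obtain ⟨j, hj⟩ : ∃ j, v (ρ.coeff j) ≤ v (f.coeff i) := by
    by_contra! hρ
    have hsub : f - ρ = q * q := by rw [hsq, add_sub_cancel_right, sq]
    exact Nat.not_even_iff_odd.2 hi ((hsub ▸ hf.sub hρ).even_of_mul_self hε)
  exact (support_inf_val_le_coeff v ρ j).trans (hj.trans (Finset.le_inf fun k _ => hf.le k))

end IsExtremalIndex

end Multiplicativity

section RootCount

variable {R Γ₀ : Type*} [CommRing R] [LinearOrderedAddCommGroupWithTop Γ₀]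

theorem isExtremalIndex_prod_linear (v : AddValuation R Γ₀) {ε : ℤ} (hε : ε ≠ 0) (α : R) {β : R}
    (hβ : v β ≠ ⊤) (s : Multiset R) :
    IsExtremalIndex v ε (s.map fun ζ => C β * X + C (α - ζ)).prod
      (s.countP fun ζ => toLex (v β, ε) < toLex (v (ζ - α), 0)) := by
  induction s using Multiset.induction_on with
  | empty => simpa using isExtremalIndex_C (v := v) ε (c := 1) (by simp)
  | cons ζ s ih =>
    rw [Multiset.map_cons, Multiset.prod_cons, Multiset.countP_cons, v.map_sub_swap ζ α,
      Nat.add_comm]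
    exact (isExtremalIndex_C_mul_X_add_C ε (α - ζ) hβ).mul hε ih

theorem isExtremalIndex_comp_linear [IsDomain R] (v : AddValuation R Γ₀) {ε : ℤ} (hε : ε ≠ 0)
    {h : R[X]} (hlead : v h.leadingCoeff ≠ ⊤) (hsplits : h.Splits) (α : R) {β : R}
    (hβ : v β ≠ ⊤) :
    IsExtremalIndex v ε (h.comp (C β * X + C α))
      (h.roots.countP fun ζ => toLex (v β, ε) < toLex (v (ζ - α), 0)) := by
  have hcomp : h.comp (C β * X + C α) =
      C h.leadingCoeff * (h.roots.map fun ζ => C β * X + C (α - ζ)).prod := by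
    conv_lhs => rw [hsplits.eq_prod_roots]
    simp [multiset_prod_comp, add_sub_assoc]
  rw [hcomp]
  simpa using (isExtremalIndex_C ε hlead).mul hε (isExtremalIndex_prod_linear v hε α hβ h.roots)

end RootCount

theorem stmt9_general {K Γ₀ : Type*} [Field K] [LinearOrderedAddCommGroupWithTop Γ₀]
    (v : AddValuation K Γ₀) {h q ρ : K[X]} (hsplits : h.Splits) {α β : K} (hβ : β ≠ 0)
    (hodd : Odd (Multiset.card (h.roots.filter fun ζ => v β < v (ζ - α))) ∨
            Odd (Multiset.card (h.roots.filter fun ζ => v β ≤ v (ζ - α))))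
    (hsq : h.comp (C β * X + C α) = q ^ 2 + ρ) :
    (ρ.support.inf fun i => v (ρ.coeff i)) ≤
      (h.comp (C β * X + C α)).support.inf fun i => v ((h.comp (C β * X + C α)).coeff i) := by
  have hh : h ≠ 0 := by
    rintro rfl
    simp at hodd
  have hext {ε : ℤ} (hε : ε ≠ 0) := isExtremalIndex_comp_linear v hε
    (v.ne_top_iff.2 (leadingCoeff_ne_zero.2 hh)) hsplits α (v.ne_top_iff.2 hβ)
  simp only [← Multiset.countP_eq_card_filter] at hodd
  rcases hodd with hfirst | hlast
  · refine (hext one_ne_zero).support_inf_val_le_of_odd one_ne_zero ?_ hsq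
    simpa [Prod.Lex.toLex_lt_toLex] using hfirst
  · have hneg : (-1 : ℤ) ≠ 0 := by decide
    refine (hext hneg).support_inf_val_le_of_odd hneg ?_ hsq
    simpa [Prod.Lex.toLex_lt_toLex, ← le_iff_lt_or_eq] using hlast

theorem isGoodPSD_zero_of_forall_le {K : Type*} [Field K] {v : AddValuation K (WithTop ℚ)}
    {h : K[X]} (hmax : ∀ q ρ : K[X], IsPSD h q ρ → gaussVal v ρ ≤ gaussVal v h) :
    IsGoodPSD v h 0 h :=
  ⟨⟨by simp, by simp⟩, (le_or_gt _ _).imp_right fun hlt => ⟨hlt, hmax⟩⟩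

/-- If the number of roots `ζ` of `h` (with multiplicity) with
`v (ζ − α) > v β` is odd, or the number with `v (ζ − α) ≥ v β` is odd, then every
part-square decomposition of `h(βz + α)` satisfies `v ρ ≤ v (h(βz + α))`; equivalently,
the trivial decomposition `h(βz+α) = 0² + h(βz+α)` is good. -/
theorem stmt9 {Kbar : Type*} [Field Kbar] [IsAlgClosed Kbar]
    (v : AddValuation Kbar (WithTop ℚ)) (hchar : (2 : Kbar) ≠ 0)
    (h : Kbar[X]) (hh : h ≠ 0) (α β : Kbar) (hβ : β ≠ 0)
    (hodd : Odd (Multiset.card (h.roots.filter fun ζ => v β < v (ζ - α))) ∨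
            Odd (Multiset.card (h.roots.filter fun ζ => v β ≤ v (ζ - α)))) :
    (∀ q ρ : Kbar[X], IsPSD (h.comp (C β * X + C α)) q ρ →
      gaussVal v ρ ≤ gaussVal v (h.comp (C β * X + C α))) ∧
    IsGoodPSD v (h.comp (C β * X + C α)) 0 (h.comp (C β * X + C α)) :=
  have hmax : ∀ q ρ : Kbar[X], IsPSD (h.comp (C β * X + C α)) q ρ →
      gaussVal v ρ ≤ gaussVal v (h.comp (C β * X + C α)) :=
    fun _ _ hpsd => stmt9_general v (IsAlgClosed.splits h) hβ hodd hpsd.1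
  ⟨hmax, isGoodPSD_zero_of_forall_le hmax⟩
end
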